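/- Let f be a homeomorphism of the open annulus 𝔸 isotopic to the identity and satisfying the intersection property, and let F be a lift of f to ℝ². Then for every p ∈ ℤ and q ∈ ℤ, Rot_weak(F^q ∘ T^p) = q·Rot_weak(F) + p (with the convention that multiplication by q and translation by p act on [−∞,+∞] in the obvious way). -/

import Mathlib

open Filter Topology Set

noncomputable section

/-- The plane ℝ². -/
abbrev Plane := ℝ × ℝ

/-- The open annulus 𝔸 = ℝ/ℤ × ℝ. -/
abbrev Ann := AddCircle (1 : ℝ) × ℝ

/-- The covering map π : ℝ² → 𝔸, (x,y) ↦ (x + ℤ, y). -/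
def prj : Plane → Ann := fun p => ((p.1 : AddCircle (1 : ℝ)), p.2)

/-- The deck transformation T^k : ℝ² → ℝ², (x,y) ↦ (x + k, y). -/
def Tr (k : ℤ) : Plane → Plane := fun p => (p.1 + (k : ℝ), p.2)

/-- `F` is a lift of `f` to the universal cover ℝ² of the annulus. -/
def IsLift (f : Ann ≃ₜ Ann) (F : Plane ≃ₜ Plane) : Prop :=
  ∀ p : Plane, prj (F p) = f (prj p)

/-- `f` is isotopic to the identity: there is a continuous family of homeomorphisms
joining the identity to `f`. -/
def IsotopicToId (f : Ann ≃ₜ Ann) : Prop :=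
  ∃ H : ℝ → Ann → Ann,
    Continuous (fun q : ℝ × Ann => H q.1 q.2) ∧
    (∀ t : ℝ, ∃ h : Ann ≃ₜ Ann, ∀ z, H t z = h z) ∧
    (∀ z, H 0 z = z) ∧ (∀ z, H 1 z = f z)

/-- An essential circle in 𝔸: a simple closed curve which is not null-homotopic. -/
def IsEssentialCircle (c : Set Ann) : Prop :=
  ∃ φ : C(AddCircle (1 : ℝ), Ann), Function.Injective φ ∧ Set.range φ = c ∧
    ¬ ∃ pt : Ann, φ.Homotopic (ContinuousMap.const _ pt)

/-- `f` has the intersection property: every essential circle meets its image. -/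
def IntersectionProperty (f : Ann → Ann) : Prop :=
  ∀ c : Set Ann, IsEssentialCircle c → (c ∩ f '' c).Nonempty

/-- `z` is a positively recurrent point of `g`: some subsequence of the forward orbit
of `z` converges to `z`. -/
def PosRec {X : Type*} [TopologicalSpace X] (g : X → X) (z : X) : Prop :=
  ∃ φ : ℕ → ℕ, StrictMono φ ∧ Tendsto (fun k => g^[φ k] z) atTop (𝓝 z)

/-- The positively recurrent point `z` has rotation number `ρ` for the lift `F` of `f`. -/
def HasRotNum (f : Ann → Ann) (F : Plane → Plane) (z : Ann) (ρ : ℝ) : Prop :=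
  PosRec f z ∧
    ∀ zt : Plane, prj zt = z →
      ∀ φ : ℕ → ℕ, StrictMono φ →
        Tendsto (fun k => f^[φ k] z) atTop (𝓝 z) →
        Tendsto (fun k => ((F^[φ k] zt).1 - zt.1) / (φ k : ℝ)) atTop (𝓝 ρ)

/-- The rotation set Rot(F): the set of rotation numbers of positively recurrent
points of `f`. -/
def Rot (f : Ann → Ann) (F : Plane → Plane) : Set ℝ := {ρ | ∃ z, HasRotNum f F z ρ}

/-- The region `L(Γ)` of the plane on the left (west) of a line `Γ` (as a subset of ℝ²):
points lying in the connected component of the complement of `Γ` containing all far-west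
points of the horizontal axis. -/
def Lset (Γ : Set Plane) : Set Plane :=
  {p | ∃ s : ℝ, ∀ x ≤ s, p ∈ connectedComponentIn Γᶜ ((x, 0) : Plane)}

/-- The region `R(Γ)` of the plane on the right (east) of a line `Γ`. -/
def Rset (Γ : Set Plane) : Set Plane :=
  {p | ∃ s : ℝ, ∀ x ≥ s, p ∈ connectedComponentIn Γᶜ ((x, 0) : Plane)}

/-- The relation `Γ₁ < Γ₂` on (essential, oriented from south to north) lines:
`Cl(L(Γ₁)) ⊆ L(Γ₂)`. -/
def lineLT (Γ₁ Γ₂ : Set Plane) : Prop := closure (Lset Γ₁) ⊆ Lset Γ₂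

/-- An essential line in ℝ², oriented from south to north: a properly embedded copy of ℝ
whose second coordinate tends to ±∞ at ±∞. -/
def IsEssLinePlane (Γ : ℝ → Plane) : Prop :=
  Continuous Γ ∧ Function.Injective Γ ∧ IsProperMap Γ ∧
    Tendsto (fun t => (Γ t).2) atTop atTop ∧ Tendsto (fun t => (Γ t).2) atBot atBot

/-- An essential line in the annulus 𝔸: a properly embedded simple path joining one end
to the other. -/
def IsEssLineAnn (γ : ℝ → Ann) : Prop :=
  Continuous γ ∧ Function.Injective γ ∧ IsProperMap γ ∧
    ((Tendsto (fun t => (γ t).2) atTop atTop ∧ Tendsto (fun t => (γ t).2) atBot atBot) ∨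
     (Tendsto (fun t => (γ t).2) atTop atBot ∧ Tendsto (fun t => (γ t).2) atBot atTop))

/-- An oriented essential line in 𝔸 joining the lower end S to the upper end N. -/
def IsEssLineAnnSN (γ : ℝ → Ann) : Prop :=
  Continuous γ ∧ Function.Injective γ ∧ IsProperMap γ ∧
    Tendsto (fun t => (γ t).2) atTop atTop ∧ Tendsto (fun t => (γ t).2) atBot atBot

/-- The weak rotation set of `F` relative to a compact set `K` of the annulus,
as a subset of [-∞,+∞]. -/
def RotWeakK (F : Plane → Plane) (K : Set Ann) : Set EReal :=
  {r | ∃ zs : ℕ → Plane, ∃ ns : ℕ → ℕ,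
      (∀ k, prj (zs k) ∈ K) ∧ (∀ k, prj (F^[ns k] (zs k)) ∈ K) ∧
      (∀ k, 0 < ns k) ∧ Tendsto ns atTop atTop ∧
      Tendsto (fun k => ((((F^[ns k] (zs k)).1 - (zs k).1) / (ns k : ℝ) : ℝ) : EReal))
        atTop (𝓝 r)}

/-- The weak rotation set of `F`: union of the `RotWeakK F K` over all compact `K ⊆ 𝔸`. -/
def RotWeak (F : Plane → Plane) : Set EReal :=
  ⋃ K ∈ {K : Set Ann | IsCompact K}, RotWeakK F K

/-- The integer power `F^k` of a homeomorphism of the plane, as a map. -/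
def hpow (F : Plane ≃ₜ Plane) : ℤ → Plane → Plane
  | Int.ofNat n => (⇑F)^[n]
  | Int.negSucc n => (⇑F.symm)^[n + 1]


theorem coe_const_of {A : Type*} [TopologicalSpace A] [PreconnectedSpace A] (g : A → ℝ)
    (hg : Continuous g) (h : ∀ a, ((g a : ℝ) : AddCircle (1:ℝ)) = 0) (a b : A) : g a = g b := by
  exact (AddCircle.isCoveringMap_coe (1:ℝ)).const_of_comp hg (fun a a' => by rw [h, h]) a b

theorem deg_inv (G : unitInterval × unitInterval → AddCircle (1:ℝ)) (hG : Continuous G)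
    (hl : ∀ s, G (s,0) = G (s,1)) (g0 g1 : unitInterval → ℝ) (h0 : Continuous g0)
    (h1 : Continuous g1) (e0 : ∀ t, G (0,t) = g0 t) (e1 : ∀ t, G (1,t) = g1 t) :
    g0 1 - g0 0 = g1 1 - g1 0 := by
  have cov := AddCircle.isCoveringMap_coe (1:ℝ)
  let L := cov.liftHomotopy ⟨G, hG⟩ ⟨g0, h0⟩ e0
  have hL : ∀ s t, ((L (s,t) : ℝ) : AddCircle (1:ℝ)) = G (s,t) := fun s t =>
    congr_fun (cov.liftHomotopy_lifts ⟨G, hG⟩ ⟨g0, h0⟩ e0) (s,t)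
  have hL0 : ∀ t, L (0,t) = g0 t := fun t => cov.liftHomotopy_zero ⟨G, hG⟩ ⟨g0, h0⟩ e0 t
  have k1 := coe_const_of (fun s => L (s,1) - L (s,0)) (by fun_prop)
    (fun s => by simp [hL, hl]) 0 1
  have k2 := coe_const_of (fun t => g1 t - L (1,t)) (by fun_prop)
    (fun t => by simp [hL, e1]) 0 1
  simp only [hL0] at k1
  linarith

theorem continuous_prj : Continuous prj := by
  unfold prj
  exact ((AddCircle.continuous_mk' (1:ℝ)).comp continuous_fst).prodMk continuous_snd

theorem prj_Tr (k : ℤ) (z : Plane) : prj (Tr k z) = prj z := by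
  have : ((k : ℝ) : AddCircle (1:ℝ)) = 0 := by
    rw [AddCircle.coe_eq_zero_iff]; exact ⟨k, by simp⟩
  simp [prj, Tr]

theorem not_null (φ : C(AddCircle (1 : ℝ), Ann)) (γ : ℝ → ℝ) (hγ : Continuous γ)
    (h : ∀ t ∈ Icc (0:ℝ) 1, (φ t).1 = γ t) (hne : γ 0 ≠ γ 1) :
    ¬ ∃ pt : Ann, φ.Homotopic (ContinuousMap.const _ pt) := by
  rintro ⟨pt, ⟨H⟩⟩
  have hc : ((1:ℝ) : AddCircle (1:ℝ)) = ((0:ℝ) : AddCircle (1:ℝ)) := by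
    simp
  obtain ⟨x, hx⟩ := QuotientAddGroup.mk_surjective pt.1
  have := deg_inv (fun q => (H (q.1, ((q.2 : ℝ) : AddCircle (1:ℝ)))).1)
    (by
      have : Continuous fun q : unitInterval × unitInterval => ((q.2 : ℝ) : AddCircle (1:ℝ)) :=
        (AddCircle.continuous_mk' (1:ℝ)).comp (by fun_prop)
      fun_prop) (fun s => by
      show (H (s, ((0:ℝ) : AddCircle (1:ℝ)))).1 = (H (s, ((1:ℝ) : AddCircle (1:ℝ)))).1
      rw [hc])
    (fun t => γ t) (fun _ => x) (by fun_prop) (by fun_prop)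
    (fun t => by simpa using h t t.2) (fun t => by simpa using hx.symm)
  simp at this
  exact hne (by linarith)

theorem F_Tr_one (f : Ann ≃ₜ Ann) (F : Plane ≃ₜ Plane)
    (hiso : IsotopicToId f) (hlift : IsLift f F) (z : Plane) :
    F (Tr 1 z) = Tr 1 (F z) := by
  obtain ⟨H, Hc, -, H0, H1⟩ := hiso
  have e := deg_inv (fun q => (H q.1 (prj (q.2, 0))).1)
    (by
      have a : Continuous fun q : unitInterval × unitInterval => 
        ((q.1 : ℝ), prj ((q.2:ℝ), 0)) := 
          (by fun_prop : Continuous fun q : unitInterval × unitInterval => (q.1:ℝ)).prodMk 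
            (continuous_prj.comp (by fun_prop))
      exact continuous_fst.comp (Hc.comp a))
    (fun s => by
      have := prj_Tr 1 (0,0)
      simp [Tr] at this
      simp [this]) (fun t => t) (fun t => (F (t,0)).1) (by fun_prop) (by fun_prop)
    (fun t => by simp [H0, prj]) (fun t => by
      have := hlift ((t:ℝ), 0)
      simp only [Set.Icc.coe_one, H1, ← this]; rfl)
  have hT : Continuous (Tr 1) := by unfold Tr; fun_prop
  have hp : prj (F (Tr 1 z)) = prj (F z) := by rw [hlift, hlift, prj_Tr]
  have k := coe_const_of (fun z => (F (Tr 1 z)).1 - (F z).1) (by fun_prop)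
    (fun z => by
      have hp : prj (F (Tr 1 z)) = prj (F z) := by rw [hlift, hlift, prj_Tr]
      have := congrArg Prod.fst hp
      simp only [prj] at this
      simp [this]) z (0,0)
  have : Tr 1 (0,0) = (1,0) := by simp [Tr]
  rw [this] at k
  simp at e
  ext
  · simp only [Tr] at k ⊢
    push_cast at k ⊢
    linarith
  · exact (congrArg Prod.snd hp : (prj (F (Tr 1 z))).2 = (prj (F z)).2)


/-- a lift commuting with the deck transformation -/
def GoodLift (g : Ann ≃ₜ Ann) (G : Plane ≃ₜ Plane) : Prop :=
  IsLift g G ∧ ∀ z, G (Tr 1 z) = Tr 1 (G z)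

theorem Tr_add (a b : ℤ) (z : Plane) : Tr (a + b) z = Tr a (Tr b z) := by
  simp [Tr]; ring

theorem Tr_zero (z : Plane) : Tr 0 z = z := by simp [Tr]

theorem comm_all (G : Plane → Plane) (h : ∀ z, G (Tr 1 z) = Tr 1 (G z)) (k : ℤ) (z : Plane) :
    G (Tr k z) = Tr k (G z) := by
  induction k generalizing z with
  | zero => simp [Tr_zero]
  | succ i ih => rw [Tr_add, ih, h, ← Tr_add]
  | pred i ih =>
    have e : ∀ w, Tr 1 (Tr (-1) w) = w := fun w => by rw [← Tr_add]; simp [Tr_zero]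
    have e' : ∀ w, Tr (-1) (Tr 1 w) = w := fun w => by rw [← Tr_add]; simp [Tr_zero]
    have h' : ∀ w, G (Tr (-1) w) = Tr (-1) (G w) := fun w => by
      rw [← e' (G (Tr (-1) w)), ← h, e]
    rw [sub_eq_add_neg, Tr_add, ih, h', ← Tr_add]

theorem GoodLift.symm {g : Ann ≃ₜ Ann} {G : Plane ≃ₜ Plane} (h : GoodLift g G) :
    GoodLift g.symm G.symm := by
  constructor
  · intro z
    rw [Homeomorph.eq_symm_apply]
    rw [← h.1, G.apply_symm_apply]
  · intro z
    rw [Homeomorph.symm_apply_eq, h.2, G.apply_symm_apply]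

theorem iter_comm (G : Plane → Plane) (h : ∀ z, G (Tr 1 z) = Tr 1 (G z)) (n : ℕ) (k : ℤ)
    (z : Plane) : G^[n] (Tr k z) = Tr k (G^[n] z) := by
  induction n generalizing z with
  | zero => rfl
  | succ n ih => rw [Function.iterate_succ_apply, Function.iterate_succ_apply, comm_all G h, ih]

theorem prj_iter {g : Ann ≃ₜ Ann} {G : Plane ≃ₜ Plane} (h : IsLift g G) (n : ℕ)
    (z : Plane) : prj (G^[n] z) = g^[n] (prj z) := by
  induction n generalizing z with
  | zero => rfl
  | succ n ih => rw [Function.iterate_succ_apply, Function.iterate_succ_apply, ih, h]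

theorem comp_iter (G : Plane → Plane) (h : ∀ z, G (Tr 1 z) = Tr 1 (G z)) (N : ℕ) (p : ℤ) (k : ℕ)
    (z : Plane) : (fun z => G^[N] (Tr p z))^[k] z = Tr (p * k) (G^[N * k] z) := by
  induction k with
  | zero => simp [Tr_zero]
  | succ k ih =>
    rw [Function.iterate_succ_apply', ih, ← Tr_add, iter_comm G h, ← Function.iterate_add_apply]
    congr 1
    · congr 1; push_cast; ring
    · rw [show N + N * k = N * (k+1) by ring]

theorem disp_bdd {g : Ann ≃ₜ Ann} {G : Plane ≃ₜ Plane} (h : GoodLift g G) (K : Set Ann)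
    (hK : IsCompact K) (t : ℕ) : ∃ D : ℝ, ∀ w, prj w ∈ K → |(G^[t] w).1 - w.1| ≤ D := by
  have hc : IsCompact (prj ⁻¹' K ∩ (Icc (0:ℝ) 1 ×ˢ (Prod.snd '' K))) := by
    apply IsCompact.inter_left
    · exact isCompact_Icc.prod (hK.image continuous_snd)
    · exact hK.isClosed.preimage continuous_prj
  have hcont : Continuous fun w => |(G^[t] w).1 - w.1| := by
    have := G.continuous.iterate t
    fun_prop
  obtain ⟨D, hD⟩ := hc.bddAbove_image hcont.continuousOn
  refine ⟨D, fun w hw => ?_⟩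
  have h1 : prj (Tr (-⌊w.1⌋) w) ∈ K := by rwa [prj_Tr]
  have := hD ⟨Tr (-⌊w.1⌋) w, ⟨h1, ?_, ?_⟩, rfl⟩
  on_goal 1 => dsimp only at this
  · rw [iter_comm G h.2] at this
    simp only [Tr] at this
    rwa [add_sub_add_right_eq_sub] at this
  · simp only [Tr]; push_cast
    have := Int.floor_le w.1; have := Int.lt_floor_add_one w.1
    constructor <;> linarith
  · exact ⟨_, h1, rfl⟩

theorem affine_tendsto {a : ℕ → ℝ} {r : EReal} (c d : ℝ) (hc : c ≠ 0)
    (h : Tendsto (fun k => (a k : EReal)) atTop (𝓝 r)) :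
    Tendsto (fun k => ((c * a k + d : ℝ) : EReal)) atTop (𝓝 ((c : EReal) * r + (d : EReal))) := by
  have h1 : Tendsto (fun k => (c : EReal) * (a k : EReal)) atTop (𝓝 ((c : EReal) * r)) := by
    have := (EReal.continuousAt_mul (p := ((c : EReal), r)) (by left; simpa using hc)
      (by left; simpa using hc) (by left; simp) (by left; simp)).tendsto
    exact this.comp (tendsto_const_nhds.prodMk_nhds h)
  have h2 := (EReal.continuousAt_add (p := ((c : EReal) * r, (d : EReal))) (by right; simp)
      (by right; simp)).tendsto
  have := h2.comp (h1.prodMk_nhds (tendsto_const_nhds (x := (d : EReal))))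
  refine this.congr fun k => ?_
  simp

theorem affine_inv (c d : ℝ) (hc : 0 < c) (r : EReal) :
    (c : EReal) * ((c⁻¹ : ℝ) * r + ((-c⁻¹ * d : ℝ) : EReal)) + (d : EReal) = r := by
  have hc' : 0 < c⁻¹ := by positivity
  induction r with
  | bot => rw [EReal.coe_mul_bot_of_pos hc', EReal.bot_add, EReal.coe_mul_bot_of_pos hc, EReal.bot_add]
  | top => rw [EReal.coe_mul_top_of_pos hc', EReal.top_add_coe, EReal.coe_mul_top_of_pos hc, EReal.top_add_coe]
  | coe x =>
    norm_cast
    field_simp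
    ring

theorem rot_pos {g : Ann ≃ₜ Ann} {G : Plane ≃ₜ Plane} (h : GoodLift g G) (N : ℕ) (hN : 0 < N)
    (p : ℤ) : RotWeak (fun z => G^[N] (Tr p z)) =
      (fun r : EReal => (((N : ℝ)) : EReal) * r + (((p : ℝ)) : EReal)) '' RotWeak ⇑G := by
  have hNR : (0:ℝ) < N := by exact_mod_cast hN
  have key : ∀ (z : Plane) (k : ℕ), 0 < k → 
      (((fun z => G^[N] (Tr p z))^[k] z).1 - z.1) / (k:ℝ) =
       (N:ℝ) * (((G^[N * k] z).1 - z.1) / ((N * k : ℕ) : ℝ)) + p := by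
    intro z k hk
    have : (0:ℝ) < k := by exact_mod_cast hk
    rw [comp_iter G h.2]
    simp only [Tr]; push_cast; field_simp; ring
  have hprj : ∀ (z : Plane) (k : ℕ), prj ((fun z => G^[N] (Tr p z))^[k] z) = prj (G^[N * k] z) := by
    intro z k; rw [comp_iter G h.2, prj_Tr]
  ext r
  simp only [RotWeak, mem_iUnion, mem_ofPred_eq, mem_image, RotWeakK, exists_prop]
  constructor
  · rintro ⟨K, hK, zs, ns, h1, h2, h3, h4, h5⟩
    refine ⟨((N:ℝ)⁻¹ : ℝ) * r + ((-(N:ℝ)⁻¹ * p : ℝ) : EReal), ⟨K, hK, zs, fun k => N * ns k, h1, 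
      fun k => by rw [← hprj]; exact h2 k, fun k => Nat.mul_pos hN (h3 k), 
      tendsto_atTop_mono (fun k => Nat.le_mul_of_pos_left _ hN) h4, ?_⟩, affine_inv _ _ hNR r⟩
    refine (affine_tendsto (N:ℝ)⁻¹ (-(N:ℝ)⁻¹ * p) (by positivity) h5).congr fun k => ?_
    rw [key _ _ (h3 k)]
    congr 1
    field_simp
    ring
  · rintro ⟨r, ⟨K, hK, zs, ns, h1, h2, h3, h4, h5⟩, rfl⟩
    choose D hD using disp_bdd h K hK
    let t : ℕ → ℕ := fun k => N - ns k % N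
    let m : ℕ → ℕ := fun k => ns k / N + 1
    have hm : ∀ k, N * m k = t k + ns k := fun k => by
      have := Nat.div_add_mod (ns k) N
      have := Nat.mod_lt (ns k) hN
      simp only [m, t, mul_add, mul_one]; omega
    have htN : ∀ k, t k ∈ Finset.range (N+1) := fun k => by simp [t]
    obtain ⟨B, hB⟩ : ∃ B : ℝ, ∀ t ∈ Finset.range (N+1), D t ≤ B := by
      obtain ⟨B, hB⟩ := ((Finset.range (N+1)).image D).bddAbove
      exact ⟨B, fun t ht => hB (by simpa using ⟨t, by simpa using ht, rfl⟩)⟩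
    have hmt : Tendsto m atTop atTop :=
      tendsto_atTop_mono (fun k => Nat.le_succ _) ((Nat.tendsto_div_const_atTop hN.ne').comp h4)
    have hmR : Tendsto (fun k => (m k : ℝ)) atTop atTop := tendsto_natCast_atTop_atTop.comp hmt
    refine ⟨K ∪ ⋃ s ∈ Finset.range (N+1), g^[s] '' K, ?_, zs, m, fun k => Or.inl (h1 k), 
      fun k => Or.inr ?_, fun k => Nat.succ_pos _, hmt, ?_⟩
    · exact hK.union ((Finset.range (N+1)).isCompact_biUnion 
        fun s _ => hK.image (g.continuous.iterate s))
    · rw [hprj, hm, Function.iterate_add_apply, prj_iter h.1]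
      simp only [mem_iUnion]
      exact ⟨t k, htN k, _, h2 k, rfl⟩
    · have hmpos : ∀ k, (0:ℝ) < m k := fun k => by exact_mod_cast Nat.succ_pos _
      suffices hs : Tendsto (fun k => (((((G^[N * m k] (zs k)).1 - (zs k).1) / ((N * m k : ℕ) : ℝ)) : ℝ) : EReal)) atTop (𝓝 r) by
        refine (affine_tendsto (N:ℝ) p hNR.ne' hs).congr fun k => ?_
        rw [key _ _ (Nat.succ_pos _)]
      let e : ℕ → ℝ := fun k => (G^[t k] (G^[ns k] (zs k))).1 - (G^[ns k] (zs k)).1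
      have he : ∀ k, |e k| ≤ B := fun k => (hD _ _ (h2 k)).trans (hB _ (htN k))
      have l1 : Tendsto (fun k => (ns k : ℝ) / ((N * m k : ℕ) : ℝ)) atTop (𝓝 1) := by
        have : Tendsto (fun k => 1 - (t k : ℝ) / ((N * m k : ℕ) : ℝ)) atTop (𝓝 (1 - 0)) := by
          refine tendsto_const_nhds.sub ?_
          refine squeeze_zero (fun k => by positivity) (fun k => ?_) (tendsto_const_nhds.div_atTop hmR : Tendsto (fun k => (2:ℝ) / m k) atTop (𝓝 0))
          have : (t k : ℝ) ≤ N := by exact_mod_cast (Nat.sub_le _ _)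
          have := hmpos k
          push_cast
          rw [div_le_div_iff₀ (by positivity) (by positivity)]
          nlinarith [mul_pos hNR (hmpos k)]
        rw [sub_zero] at this
        refine this.congr fun k => ?_
        have h0 : ((N * m k : ℕ) : ℝ) = t k + ns k := by exact_mod_cast hm k
        have : (0:ℝ) < ((N * m k : ℕ) : ℝ) := by exact_mod_cast Nat.mul_pos hN (Nat.succ_pos _)
        field_simp
        rw [h0]; ring
      have l2 : Tendsto (fun k => e k / ((N * m k : ℕ) : ℝ)) atTop (𝓝 0) := by
        have hd : Tendsto (fun k => ((N * m k : ℕ) : ℝ)) atTop atTop := 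
          tendsto_natCast_atTop_atTop.comp (tendsto_atTop_mono (fun k => Nat.le_mul_of_pos_left _ hN) hmt)
        refine squeeze_zero_norm (fun k => ?_) (tendsto_const_nhds.div_atTop hd : Tendsto (fun k => B / ((N * m k : ℕ) : ℝ)) atTop (𝓝 0))
        rw [norm_div, Real.norm_eq_abs, Real.norm_of_nonneg (by positivity)]
        exact div_le_div_of_nonneg_right (he k) (by positivity)
      have l1' : Tendsto (fun k => (((ns k : ℝ) / ((N * m k : ℕ) : ℝ) : ℝ) : EReal)) atTop (𝓝 ((1:ℝ):EReal)) :=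
        (continuous_coe_real_ereal.tendsto _).comp l1
      have l2' : Tendsto (fun k => ((e k / ((N * m k : ℕ) : ℝ) : ℝ) : EReal)) atTop (𝓝 ((0:ℝ):EReal)) :=
        (continuous_coe_real_ereal.tendsto _).comp l2
      have c1 := (EReal.continuousAt_mul (p := (((1:ℝ) : EReal), r)) (by left; simp)
        (by left; simp) (by left; exact EReal.coe_ne_bot _) (by left; exact EReal.coe_ne_top _)).tendsto.comp (l1'.prodMk_nhds h5)
      have c2 := (EReal.continuousAt_add (p := (((1:ℝ):EReal) * r, ((0:ℝ) : EReal))) (by right; simp)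
        (by right; simp)).tendsto.comp (c1.prodMk_nhds l2')
      have hr : ((1:ℝ):EReal) * r + ((0:ℝ) : EReal) = r := by simp
      simp only [hr] at c2
      refine c2.congr fun k => ?_
      have n0 : (0:ℝ) < ns k := by exact_mod_cast h3 k
      have : (0:ℝ) < ((N * m k : ℕ) : ℝ) := by exact_mod_cast Nat.mul_pos hN (Nat.succ_pos _)
      simp only [Function.comp]
      rw [← EReal.coe_mul, ← EReal.coe_add]
      congr 1
      rw [show (G^[N * m k] (zs k)) = G^[t k] (G^[ns k] (zs k)) by rw [hm, Function.iterate_add_apply]]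
      simp only [e]
      field_simp
      ring

theorem rot_symm_sub {g : Ann ≃ₜ Ann} {G : Plane ≃ₜ Plane} (h : GoodLift g G) (r : EReal)
    (hr : r ∈ RotWeak G) : -r ∈ RotWeak G.symm := by
  simp only [RotWeak, mem_iUnion, mem_ofPred_eq, RotWeakK, exists_prop] at hr ⊢
  obtain ⟨K, hK, zs, ns, h1, h2, h3, h4, h5⟩ := hr
  have e : ∀ k, G.symm^[ns k] (G^[ns k] (zs k)) = zs k := fun k =>
    (Function.LeftInverse.iterate G.symm_apply_apply _) _
  refine ⟨K, hK, fun k => G^[ns k] (zs k), ns, h2, fun k => by rw [e]; exact h1 k, h3, h4, ?_⟩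
  refine (((continuous_neg (G := EReal)).tendsto r).comp h5).congr fun k => ?_
  simp only [Function.comp, e]
  rw [← EReal.coe_neg]
  congr 1
  ring

theorem rot_symm {g : Ann ≃ₜ Ann} {G : Plane ≃ₜ Plane} (h : GoodLift g G) :
    RotWeak G.symm = Neg.neg '' RotWeak G := by
  ext r
  constructor
  · intro hr
    exact ⟨-r, by simpa using rot_symm_sub h.symm r hr, neg_neg r⟩
  · rintro ⟨r, hr, rfl⟩
    exact rot_symm_sub h r hr

theorem main_of_nonempty {f : Ann ≃ₜ Ann} {F : Plane ≃ₜ Plane} (h : GoodLift f F)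
    (hne : (RotWeak F).Nonempty) (p q : ℤ) :
    RotWeak (fun z => hpow F q (Tr p z)) =
      (fun r : EReal => (((q : ℝ)) : EReal) * r + (((p : ℝ)) : EReal)) '' RotWeak ⇑F := by
  rcases q with (_ | n) | n
  · simp only [Int.ofNat_eq_natCast, Nat.cast_zero, Int.cast_zero, EReal.coe_zero, zero_mul, zero_add]
    rw [hne.image_const]
    have hz : (fun z => hpow F 0 (Tr p z)) = fun z => F^[0] (Tr p z) := rfl
    have key : ∀ (z : Plane) (k : ℕ), 0 < k → 
      (((fun z => hpow F 0 (Tr p z))^[k] z).1 - z.1) / (k:ℝ) = p := by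
      intro z k hk
      have : (0:ℝ) < k := by exact_mod_cast hk
      rw [hz, comp_iter F h.2]
      simp [Tr]; field_simp
    ext r
    simp only [RotWeak, mem_iUnion, mem_ofPred_eq, RotWeakK, exists_prop, mem_singleton_iff]
    constructor
    · rintro ⟨K, hK, zs, ns, h1, h2, h3, h4, h5⟩
      refine tendsto_nhds_unique h5 ?_
      simp only [key _ _ (h3 _)]
      exact tendsto_const_nhds
    · rintro rfl
      refine ⟨{prj (0,0)}, isCompact_singleton, fun _ => (0,0), fun k => k + 1, fun k => rfl, 
        fun k => ?_, fun k => k.succ_pos, tendsto_add_atTop_nat 1, ?_⟩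
      · rw [hz, comp_iter F h.2, prj_Tr]; simp
      · simp only [key _ _ (Nat.succ_pos _)]
        exact tendsto_const_nhds
  · exact rot_pos h (n+1) n.succ_pos p
  · have := rot_pos h.symm (n+1) n.succ_pos p
    rw [rot_symm h, image_image] at this
    refine this.trans (image_congr fun r _ => ?_)
    congr 1
    rw [mul_neg, ← neg_mul]
    congr 1
    rw [← EReal.coe_neg]
    congr 1
    push_cast
    ring


/-- adjacency in the grid -/
def gAdj (a b : ℤ × ℤ) : Prop :=
  (b.1 = a.1 + 1 ∧ b.2 = a.2) ∨ (b.1 = a.1 - 1 ∧ b.2 = a.2) ∨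
  (b.1 = a.1 ∧ b.2 = a.2 + 1) ∨ (b.1 = a.1 ∧ b.2 = a.2 - 1)

theorem gAdj.symm {a b : ℤ × ℤ} (h : gAdj a b) : gAdj b a := by
  unfold gAdj at *; omega

/-- shift in the grid -/
def gSh (m : ℕ) (k : ℤ) (a : ℤ × ℤ) : ℤ × ℤ := (a.1 + m * k, a.2)

/-- allowed step in the grid -/
def gStep (P : ℤ × ℤ → Prop) (a b : ℤ × ℤ) : Prop := P a ∧ P b ∧ gAdj a b

theorem gSh_gSh (m : ℕ) (k l : ℤ) (a : ℤ × ℤ) : gSh m k (gSh m l a) = gSh m (k + l) a := by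
  simp [gSh]; ring

theorem gSh_zero (m : ℕ) (a : ℤ × ℤ) : gSh m 0 a = a := by simp [gSh]

theorem gAdj.sh {a b : ℤ × ℤ} (h : gAdj a b) (m : ℕ) (k : ℤ) : gAdj (gSh m k a) (gSh m k b) := by
  simp only [gAdj, gSh] at *; omega

theorem exists_potential (m : ℕ) (P : ℤ × ℤ → Prop) (hP : ∀ k a, P (gSh m k a) ↔ P a)
    (hno : ∀ a k, Relation.ReflTransGen (gStep P) a (gSh m k a) → k = 0) :
    ∃ θ : ℤ × ℤ → ℤ, (∀ a, θ (gSh m 1 a) = θ a) ∧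
      ∀ a b, gStep P a b → θ b - θ a = b.1 - a.1 := by
  have hsymm : ∀ a b, Relation.ReflTransGen (gStep P) a b → Relation.ReflTransGen (gStep P) b a :=
    fun a b h => by
      have : Std.Symm (gStep P) := ⟨fun a b h => ⟨h.2.1, h.1, h.2.2.symm⟩⟩
      exact Std.Symm.symm _ _ h
  have hsh : ∀ k a b, Relation.ReflTransGen (gStep P) a b →
      Relation.ReflTransGen (gStep P) (gSh m k a) (gSh m k b) := fun k a b h =>
    h.lift (gSh m k) fun a b h => ⟨(hP _ _).2 h.1, (hP _ _).2 h.2.1, h.2.2.sh m k⟩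
  let S : Setoid (ℤ × ℤ) :=
    { r := fun a b => ∃ k, Relation.ReflTransGen (gStep P) a (gSh m k b)
      iseqv := ⟨fun a => ⟨0, by rw [gSh_zero]⟩, 
        fun {a b} ⟨k, h⟩ => ⟨-k, by
          have := hsh (-k) _ _ (hsymm _ _ h)
          rwa [gSh_gSh, neg_add_cancel, gSh_zero] at this⟩,
        fun {a b c} ⟨k, h⟩ ⟨l, h'⟩ => ⟨k + l, by
          have := hsh k _ _ h'
          rw [gSh_gSh] at this
          exact h.trans this⟩⟩ }
  let r : ℤ × ℤ → ℤ × ℤ := fun a => (Quotient.mk S a).out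
  have hr : ∀ a, ∃ k, Relation.ReflTransGen (gStep P) a (gSh m k (r a)) := fun a =>
    S.symm (Quotient.mk_out a)
  choose κ hκ using hr
  have uniq : ∀ (c : ℤ × ℤ) k l, Relation.ReflTransGen (gStep P) (gSh m k c) (gSh m l c) → k = l := by
    intro c k l h
    have := hno (gSh m k c) (l - k) (by rwa [gSh_gSh, sub_add_cancel])
    omega
  have hreq : ∀ a b, (∃ k, Relation.ReflTransGen (gStep P) a (gSh m k b)) → r a = r b := by
    intro a b h
    simp only [r]
    rw [Quotient.sound (s := S) h]
  refine ⟨fun a => a.1 - m * κ a, fun a => ?_, fun a b h => ?_⟩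
  · have e : r (gSh m 1 a) = r a := hreq _ _ ⟨1, .refl⟩
    have h1 := hκ (gSh m 1 a)
    rw [e] at h1
    have h2 := hsh 1 _ _ (hκ a)
    rw [gSh_gSh] at h2
    have := uniq _ _ _ ((hsymm _ _ h1).trans h2)
    dsimp only; rw [this]; simp only [gSh]; ring
  · have hab : Relation.ReflTransGen (gStep P) a b := .single h
    have e : r a = r b := hreq _ _ ⟨0, by rwa [gSh_zero]⟩
    have h1 := hκ a
    rw [e] at h1
    have := uniq _ _ _ ((hsymm _ _ h1).trans (hab.trans (hκ b)))
    dsimp only; rw [this]; ring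

theorem exists_reach (m : ℕ) (hm : 0 < m) (U : ℤ × ℤ → ℝ) (J : ℤ)
    (hper : ∀ k a, U (gSh m k a) = U a) (hlow : ∀ a : ℤ × ℤ, a.2 ≤ -J → U a = 0)
    (hhigh : ∀ a : ℤ × ℤ, J ≤ a.2 → U a = 1)
    (hadj : ∀ a b, gAdj a b → |U a - U b| ≤ 1/10) :
    ∃ a k, k ≠ 0 ∧
      Relation.ReflTransGen (gStep fun a => 1/4 < U a ∧ U a < 3/4) a (gSh m k a) := by
  by_contra hcon
  have hno : ∀ a k, Relation.ReflTransGen (gStep fun a => 1/4 < U a ∧ U a < 3/4) a (gSh m k a) → k = 0 := by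
    intro a k h
    by_contra hk
    exact hcon ⟨a, k, hk, h⟩
  obtain ⟨θ, hθ, hst⟩ := exists_potential m _ (fun k a => by rw [hper]) hno
  classical
  let ψ : ℤ × ℤ → ℤ := fun a => if U a < 1/2 then 0 else θ a
  have hψ : ∀ a, ψ (gSh m 1 a) = ψ a := fun a => by simp only [ψ, hper, hθ]
  let η : ℤ × ℤ → ℤ × ℤ → ℤ := fun a b =>
    if U a < 1/2 ∨ U b < 1/2 then (b.1 - a.1) - (ψ b - ψ a) else 0
  have hη : ∀ a b c, gAdj a b → U c < 1/2 → (|U c - U a| ≤ 2/10) → (|U c - U b| ≤ 2/10) →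
      η a b = (b.1 - a.1) - (ψ b - ψ a) := by
    intro a b c hab hc ha hb
    simp only [η]
    split_ifs with h
    · rfl
    · push Not at h
      rw [abs_le] at ha hb
      have := hst a b ⟨⟨by linarith, by linarith⟩, ⟨by linarith, by linarith⟩, hab⟩
      simp only [ψ, not_lt.2 h.1, not_lt.2 h.2, if_false]
      omega
  have hη0 : ∀ a b, ¬ U a < 1/2 → ¬ U b < 1/2 → η a b = 0 := fun a b h h' => by
    simp [η, -one_div, h, h']
  have sq : ∀ i j : ℤ, η (i,j) (i+1,j) + η (i+1,j) (i+1,j+1) = η (i,j) (i,j+1) + η (i,j+1) (i+1,j+1) := by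
    intro i j
    have a1 : gAdj (i,j) (i+1,j) := by simp [gAdj]
    have a2 : gAdj (i+1,j) (i+1,j+1) := by simp [gAdj]
    have a3 : gAdj (i,j) (i,j+1) := by simp [gAdj]
    have a4 : gAdj (i,j+1) (i+1,j+1) := by simp [gAdj]
    have b1 := abs_le.1 (hadj _ _ a1)
    have b2 := abs_le.1 (hadj _ _ a2)
    have b3 := abs_le.1 (hadj _ _ a3)
    have b4 := abs_le.1 (hadj _ _ a4)
    by_cases hc : ∃ c, U c < 1/2 ∧ (c = (i,j) ∨ c = (i+1,j) ∨ c = (i,j+1) ∨ c = (i+1,j+1))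
    · obtain ⟨c, hc, hcc⟩ := hc
      have d : |U c - U (i,j)| ≤ 2/10 ∧ |U c - U (i+1,j)| ≤ 2/10 ∧ |U c - U (i,j+1)| ≤ 2/10 ∧
          |U c - U (i+1,j+1)| ≤ 2/10 := by
        simp only [abs_le]
        rcases hcc with rfl | rfl | rfl | rfl <;> refine ⟨⟨?_,?_⟩,⟨?_,?_⟩,⟨?_,?_⟩,⟨?_,?_⟩⟩ <;> linarith
      rw [hη _ _ c a1 hc d.1 d.2.1, hη _ _ c a2 hc d.2.1 d.2.2.2, hη _ _ c a3 hc d.1 d.2.2.1,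
        hη _ _ c a4 hc d.2.2.1 d.2.2.2]
      ring
    · push Not at hc
      have c1 : ¬ U (i,j) < 1/2 := fun h => (hc _ h).1 rfl
      have c2 : ¬ U (i+1,j) < 1/2 := fun h => (hc _ h).2.1 rfl
      have c3 : ¬ U (i,j+1) < 1/2 := fun h => (hc _ h).2.2.1 rfl
      have c4 : ¬ U (i+1,j+1) < 1/2 := fun h => (hc _ h).2.2.2 rfl
      rw [hη0 _ _ c1 c2, hη0 _ _ c2 c4, hη0 _ _ c1 c3, hη0 _ _ c3 c4]
  let S : ℤ → ℤ := fun j => ∑ i ∈ Finset.range m, η ((i:ℤ), j) ((i:ℤ)+1, j)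
  have hS : ∀ j, S (j+1) = S j := by
    intro j
    have h1 : S (j+1) - S j = ∑ i ∈ Finset.range m, (η (((i+1 : ℕ) : ℤ),j) (((i+1 : ℕ) : ℤ),j+1) - η ((i:ℤ),j) ((i:ℤ),j+1)) := by
      simp only [S]
      rw [← Finset.sum_sub_distrib]
      refine Finset.sum_congr rfl fun i _ => ?_
      have := sq i j
      push_cast
      omega
    rw [Finset.sum_range_sub (fun i : ℕ => η ((i:ℤ),j) ((i:ℤ),j+1))] at h1
    have e1 : ((m:ℤ), j) = gSh m 1 (0, j) := by simp [gSh]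
    have e2 : ((m:ℤ), j+1) = gSh m 1 (0, j+1) := by simp [gSh]
    have : η ((m:ℤ), j) ((m:ℤ), j+1) = η (0,j) (0,j+1) := by
      simp only [η]
      rw [e1, e2, hper, hper, hψ, hψ]
      simp [gSh]
    simp only [this, Nat.cast_zero, sub_self] at h1
    omega
  have hconst : ∀ n : ℕ, ∀ j, S (j + n) = S j := by
    intro n
    induction n with
    | zero => simp
    | succ n ih => intro j; push_cast; rw [← add_assoc, hS, ih]
  have hSlow : S (-|J|) = m := by
    have hl : ∀ i : ℤ, U (i, -|J|) = 0 := fun i => hlow _ (by simp; exact le_abs_self J)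
    simp [S, η, hl, ψ]
  have hShigh : S |J| = 0 := by
    have hl : ∀ i : ℤ, U (i, |J|) = 1 := fun i => hhigh _ (le_abs_self J)
    simp only [S]
    refine Finset.sum_eq_zero fun i _ => hη0 _ _ ?_ ?_ <;> rw [hl] <;> norm_num
  have := hconst (2 * |J|).toNat (-|J|)
  rw [Int.toNat_of_nonneg (by positivity), show -|J| + 2 * |J| = |J| by ring, hSlow, hShigh] at this
  omega

/-- closed walks of length `n` and displacement `k` -/
def gWalk (m : ℕ) (P : ℤ × ℤ → Prop) (n : ℕ) (k : ℤ) (v : ℕ → ℤ × ℤ) : Prop :=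
  (∀ i ≤ n, P (v i)) ∧ (∀ i < n, gAdj (v i) (v (i+1))) ∧ v n = gSh m k (v 0)

theorem exists_min_walk (m : ℕ) (P : ℤ × ℤ → Prop) (a : ℤ × ℤ) (k : ℤ) (hm : 0 < m) (hk : k ≠ 0)
    (h : Relation.ReflTransGen (gStep P) a (gSh m k a)) :
    ∃ n k v, k ≠ 0 ∧ gWalk m P n k v ∧
      ∀ i < n, ∀ j < n, ∀ l, v i = gSh m l (v j) → i = j := by
  have ex : ∃ n k v, k ≠ 0 ∧ gWalk m P n k v := by
    have : ∀ b, Relation.ReflTransGen (gStep P) a b → a ≠ b → ∃ n, ∃ v : ℕ → ℤ × ℤ, 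
        (∀ i ≤ n, P (v i)) ∧ (∀ i < n, gAdj (v i) (v (i+1))) ∧ v 0 = a ∧ v n = b := by
      intro b hb
      induction hb with
      | refl => intro h; exact absurd rfl h
      | @tail b c hb hbc ih =>
        intro _
        by_cases hab : a = b
        · subst hab
          refine ⟨1, fun i => if i = 0 then a else c, fun i hi => ?_, fun i hi => ?_, rfl, rfl⟩
          · by_cases h0 : i = 0
            · simpa [h0] using hbc.1
            · simpa [h0] using hbc.2.1
          · obtain rfl : i = 0 := by omega
            simpa using hbc.2.2
        · obtain ⟨n, v, h1, h2, h3, h4⟩ := ih hab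
          refine ⟨n + 1, fun i => if i ≤ n then v i else c, fun i hi => ?_, fun i hi => ?_, by simpa using h3, by simp⟩
          · dsimp only
            split_ifs with h
            · exact h1 i h
            · exact hbc.2.1
          · dsimp only
            rw [if_pos (by omega)]
            split_ifs with h
            · exact h2 i (by omega)
            · obtain rfl : i = n := by omega
              rw [h4]; exact hbc.2.2
    obtain ⟨n, v, h1, h2, h3, h4⟩ := this _ h (fun e => by
      have := congrArg Prod.fst e
      simp [gSh] at this
      omega)
    exact ⟨n, k, v, hk, h1, h2, by rw [h3, h4]⟩
  classical
  obtain ⟨k, v, hk, hw⟩ := Nat.find_spec ex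
  have hmin := fun n hn => Nat.find_min ex (m := n) hn
  set n := Nat.find ex
  have main : ∀ i j, i < j → j < n → ∀ l, v j = gSh m l (v i) → False := by
    intro i j hij hj l hl
    obtain ⟨w1, w2, w3⟩ := hw
    by_cases hl0 : l = 0
    · subst hl0
      rw [gSh_zero] at hl
      refine hmin (n - (j - i)) (by omega) ⟨k, fun t => if t ≤ i then v t else v (t + (j - i)), hk, ?_, ?_, ?_⟩
      · intro t ht
        dsimp only
        split_ifs
        · exact w1 _ (by omega)
        · exact w1 _ (by omega)
      · intro t ht
        dsimp only
        split_ifs with c1 c2 c2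
        · exact w2 _ (by omega)
        · obtain rfl : t = i := by omega
          rw [← hl, show t + 1 + (j - t) = j + 1 by omega]
          exact w2 _ hj
        · omega
        · rw [show t + 1 + (j - i) = t + (j - i) + 1 by omega]
          exact w2 _ (by omega)
      · dsimp only
        rw [if_neg (by omega), if_pos (by omega), show n - (j - i) + (j - i) = n by omega, w3]
    · refine hmin (j - i) (by omega) ⟨l, fun t => v (i + t), hl0, fun t ht => w1 _ (by omega), fun t ht => w2 _ (by omega), ?_⟩
      dsimp only
      rw [show i + (j - i) = j by omega, hl, add_zero]
  refine ⟨n, k, v, hk, hw, fun i hi j hj l h => ?_⟩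
  rcases lt_trichotomy i j with hij | hij | hij
  · exfalso
    refine main i j hij hj (-l) ?_
    rw [h, gSh_gSh, neg_add_cancel, gSh_zero]
  · exact hij
  · exact (main j i hij hi l h).elim

theorem edge_lemma (a1 a2 b1 b2 c1 c2 d1 d2 : ℤ) (s s' : ℝ) (hs : 0 ≤ s) (hs1 : s < 1)
    (hs' : 0 ≤ s') (hs1' : s' < 1) (hab : gAdj (a1,a2) (b1,b2)) (hcd : gAdj (c1,c2) (d1,d2))
    (e1 : (a1:ℝ) + s * (b1 - a1) = c1 + s' * (d1 - c1))
    (e2 : (a2:ℝ) + s * (b2 - a2) = c2 + s' * (d2 - c2)) :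
    (a1 = c1 ∧ a2 = c2 ∧ s = s') ∨ (a1 = d1 ∧ a2 = d2 ∧ b1 = c1 ∧ b2 = c2) := by
  have hn : ∀ a c : ℤ, (a:ℝ) - c < 2 → (c:ℝ) - a < 2 → a = c - 1 ∨ a = c ∨ a = c + 1 := by
    intro a c h1 h2
    have : a - c < 2 := by exact_mod_cast h1
    have : c - a < 2 := by exact_mod_cast h2
    omega
  simp only [gAdj] at hab hcd
  rcases hab with ⟨h1, h2⟩ | ⟨h1, h2⟩ | ⟨h1, h2⟩ | ⟨h1, h2⟩ <;>
  rcases hcd with ⟨h3, h4⟩ | ⟨h3, h4⟩ | ⟨h3, h4⟩ | ⟨h3, h4⟩ <;>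
  rw [h1, h3] at e1 <;> rw [h2, h4] at e2 <;>
  push_cast at e1 e2 <;>
  ring_nf at e1 e2 <;>
  rcases hn a1 c1 (by linarith) (by linarith) with h5 | h5 | h5 <;>
  rcases hn a2 c2 (by linarith) (by linarith) with h6 | h6 | h6 <;>
  rw [h5] at e1 <;> rw [h6] at e2 <;>
  push_cast at e1 e2 <;>
  first
    | (exfalso; linarith)
    | (left; exact ⟨h5, h6, by linarith⟩)
    | (right; refine ⟨?_, ?_, ?_, ?_⟩ <;> omega)


/-- piecewise linear interpolation -/
def plI (L : ℕ) (v : ℕ → ℝ) (t : ℝ) : ℝ :=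
  v 0 + ∑ i ∈ Finset.range L, max 0 (min (t - i) 1) * (v (i+1) - v i)

theorem plI_cont (L : ℕ) (v : ℕ → ℝ) : Continuous (plI L v) := by
  unfold plI; fun_prop

theorem plI_eq (L : ℕ) (v : ℕ → ℝ) (i : ℕ) (hi : i < L) (s : ℝ) (h0 : 0 ≤ s) (h1 : s ≤ 1) :
    plI L v (i + s) = v i + s * (v (i+1) - v i) := by
  unfold plI
  induction L, Nat.succ_le_of_lt hi using Nat.le_induction with
  | base =>
    rw [Finset.sum_range_succ]
    have : ∑ j ∈ Finset.range i, max 0 (min ((i:ℝ) + s - j) 1) * (v (j+1) - v j) =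
        ∑ j ∈ Finset.range i, (v (j+1) - v j) := by
      refine Finset.sum_congr rfl fun j hj => ?_
      have : (j:ℝ) + 1 ≤ i := by exact_mod_cast Finset.mem_range.1 hj
      rw [min_eq_right (by linarith), max_eq_right (by norm_num), one_mul]
    rw [this, Finset.sum_range_sub, add_sub_cancel_left, min_eq_left h1, max_eq_right h0]
    ring
  | succ L hL ih =>
    rw [Finset.sum_range_succ, ← add_assoc, ih (by omega)]
    have : (i:ℝ) + 1 ≤ L := by exact_mod_cast hL
    rw [max_eq_left (min_le_of_left_le (by linarith))]
    ring

theorem unif (u : Ann → ℝ) (hu : Continuous u) (M : ℝ) (hM : 0 ≤ M)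
    (hlow : ∀ z : Ann, z.2 ≤ -M → u z = 0) (hhigh : ∀ z : Ann, M ≤ z.2 → u z = 1) :
    ∃ δ > 0, ∀ a b : Plane, |a.1 - b.1| < δ → |a.2 - b.2| < δ → |u (prj a) - u (prj b)| ≤ 1/10 := by
  have hc : IsCompact ((univ : Set (AddCircle (1:ℝ))) ×ˢ Icc (-M) M) := by
    haveI : Fact ((0:ℝ) < 1) := ⟨one_pos⟩
    exact isCompact_univ.prod isCompact_Icc
  have huc := hc.uniformContinuousOn_of_continuous hu.continuousOn
  rw [Metric.uniformContinuousOn_iff] at huc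
  obtain ⟨δ, hδ, h⟩ := huc (1/10) (by norm_num)
  have hcl : ∀ z : Ann, u z = u (z.1, max (-M) (min z.2 M)) := by
    intro z
    rcases le_total z.2 (-M) with h1 | h1
    · rw [hlow z h1, hlow]
      simp [min_le_of_left_le h1]
    · rcases le_total z.2 M with h2 | h2
      · rw [min_eq_left h2, max_eq_right h1]
      · rw [hhigh z h2, hhigh]
        simp [h2]
  refine ⟨δ, hδ, fun a b h1 h2 => ?_⟩
  rw [hcl (prj a), hcl (prj b)]
  have := h ((prj a).1, max (-M) (min (prj a).2 M)) ⟨mem_univ _, by simp [hM], by simp [hM]⟩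
    ((prj b).1, max (-M) (min (prj b).2 M)) ⟨mem_univ _, by simp [hM], by simp [hM]⟩ ?_
  · rw [Real.dist_eq] at this; exact this.le
  · rw [Prod.dist_eq, max_lt_iff]
    constructor
    · simp only [prj]
      rw [dist_eq_norm, ← AddCircle.coe_sub]
      refine lt_of_le_of_lt ?_ h1
      exact QuotientAddGroup.norm_mk_le_norm
    · simp only [prj]
      rw [Real.dist_eq]
      refine lt_of_le_of_lt ?_ h2
      refine (abs_max_sub_max_le_max _ _ _ _).trans ?_
      simp
      have := abs_min_sub_min_le_max a.2 M b.2 M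
      simpa using this

theorem adj_bound (a b : ℤ × ℤ) (h : gAdj a b) : |(b.1:ℝ) - a.1| ≤ 1 ∧ |(b.2:ℝ) - a.2| ≤ 1 := by
  rcases h with ⟨h1, h2⟩ | ⟨h1, h2⟩ | ⟨h1, h2⟩ | ⟨h1, h2⟩ <;> simp [h1, h2]

theorem exists_circle (u : Ann → ℝ) (hu : Continuous u) (M : ℝ) (hM : 0 ≤ M)
    (hlow : ∀ z : Ann, z.2 ≤ -M → u z = 0) (hhigh : ∀ z : Ann, M ≤ z.2 → u z = 1) :
    ∃ c, IsEssentialCircle c ∧ ∀ z ∈ c, 0 < u z ∧ u z < 1 := by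
  obtain ⟨δ, hδ, hun⟩ := unif u hu M hM hlow hhigh
  obtain ⟨m, hm⟩ := exists_nat_gt (max 3 (1/δ))
  have hm3' : (3:ℝ) < m := (le_max_left _ _).trans_lt hm
  have hm3 : 3 < m := by exact_mod_cast hm3'
  have hm0 : (0:ℝ) < m := by linarith
  have hmδ : 1 / (m:ℝ) < δ := by
    have := (le_max_right _ _).trans_lt hm
    rw [div_lt_iff₀ hδ] at this
    rw [div_lt_iff₀ hm0]; linarith
  have hsmall : ∀ x y : ℝ, |y - x| ≤ 1 → |x / m - y / m| < δ := by
    intro x y h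
    rw [← sub_div, abs_div, abs_of_pos hm0, abs_sub_comm]
    exact (div_le_div_of_nonneg_right h hm0.le).trans_lt hmδ
  let U : ℤ × ℤ → ℝ := fun a => u (prj ((a.1:ℝ) / m, (a.2:ℝ) / m))
  obtain ⟨a, k, hk, hr⟩ := exists_reach m (by omega) U ⌈M * m⌉
    (fun k a => by
      have := prj_Tr k ((a.1:ℝ) / m, (a.2:ℝ) / m)
      simp only [U, gSh]
      rw [← this]
      simp only [Tr]
      congr 3
      push_cast
      field_simp)
    (fun a ha => hlow _ (by
      have h1 : M * m ≤ ⌈M * m⌉ := Int.le_ceil _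
      have h2 : (a.2:ℝ) ≤ -⌈M * m⌉ := by exact_mod_cast ha
      simp only [prj]
      rw [div_le_iff₀ hm0]; linarith))
    (fun a ha => hhigh _ (by
      have h1 : M * m ≤ ⌈M * m⌉ := Int.le_ceil _
      have h2 : (⌈M * m⌉:ℝ) ≤ a.2 := by exact_mod_cast ha
      simp only [prj]
      rw [le_div_iff₀ hm0]; linarith))
    (fun a b hab => hun _ _ (hsmall _ _ (adj_bound a b hab).1) (hsmall _ _ (adj_bound a b hab).2))
  obtain ⟨L, k, v, hk, ⟨w1, w2, w3⟩, w4⟩ := exists_min_walk m _ a k (by omega) hk hr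
  have hL3 : 3 ≤ L := by
    have hd : ∀ i ≤ L, |(v i).1 - (v 0).1| ≤ i := by
      intro i
      induction i with
      | zero => simp
      | succ i ih =>
        intro hi
        have h1 := abs_le.1 (ih (by omega))
        have h2 := w2 i (by omega)
        simp only [gAdj] at h2
        rw [abs_le]; push_cast; omega
    have := hd L le_rfl
    rw [w3] at this
    simp only [gSh, add_sub_cancel_left, abs_mul, Nat.abs_cast] at this
    have h1 : 1 ≤ |k| := Int.one_le_abs hk
    have : (m:ℤ) * 1 ≤ m * |k| := by gcongr
    omega
  have hL0 : (0:ℝ) < L := by exact_mod_cast (by omega : 0 < L)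
  let γ : ℝ → Plane := fun t => 
    (plI L (fun i => ((v i).1:ℝ)) (L * t) / m, plI L (fun i => ((v i).2:ℝ)) (L * t) / m)
  have hγc : Continuous γ := by
    have := plI_cont L (fun i => ((v i).1:ℝ))
    have := plI_cont L (fun i => ((v i).2:ℝ))
    fun_prop
  have hγ : ∀ i < L, ∀ s, 0 ≤ s → s ≤ 1 → ∀ t, (L:ℝ) * t = i + s → 
      γ t = (((v i).1 + s * ((v (i+1)).1 - (v i).1)) / m, ((v i).2 + s * ((v (i+1)).2 - (v i).2)) / m) := by
    intro i hi s h0 h1 t ht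
    simp only [γ, ht]
    rw [plI_eq _ _ i hi s h0 h1, plI_eq _ _ i hi s h0 h1]
  have hγ0 : γ 0 = (((v 0).1:ℝ) / m, ((v 0).2:ℝ) / m) := by
    rw [hγ 0 (by omega) 0 le_rfl zero_le_one 0 (by simp)]; simp
  have hγ1 : γ 1 = Tr k (γ 0) := by
    have e : L - 1 + 1 = L := by omega
    rw [hγ (L-1) (by omega) 1 zero_le_one le_rfl 1 (by rw [mul_one]; exact_mod_cast e.symm), e, w3, hγ0]
    simp only [gSh, Tr]
    push_cast
    ext <;> simp <;> field_simp
  have hloop : prj (γ 0) = prj (γ 1) := by rw [hγ1, prj_Tr]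
  have hdec : ∀ t ∈ Ico (0:ℝ) 1, ∃ i < L, ∃ s, 0 ≤ s ∧ s < 1 ∧ (L:ℝ) * t = i + s := by
    intro t ht
    have h0 : 0 ≤ (L:ℝ) * t := mul_nonneg hL0.le ht.1
    refine ⟨⌊(L:ℝ) * t⌋₊, ?_, L * t - ⌊(L:ℝ) * t⌋₊, ?_, ?_, by ring⟩
    · rw [Nat.floor_lt h0]; nlinarith [ht.2]
    · linarith [Nat.floor_le h0]
    · linarith [Nat.lt_floor_add_one ((L:ℝ) * t)]
  haveI : Fact ((0:ℝ) < 1) := ⟨one_pos⟩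
  let φ : C(AddCircle (1:ℝ), Ann) := ⟨AddCircle.liftIco 1 0 (fun t => prj (γ t)),
    AddCircle.liftIco_zero_continuous hloop (continuous_prj.comp hγc).continuousOn⟩
  have hφ : ∀ t ∈ Ico (0:ℝ) 1, φ t = prj (γ t) := by
    intro t ht
    change AddCircle.liftIco 1 0 (fun t => prj (γ t)) (t : AddCircle (1:ℝ)) = prj (γ t)
    exact AddCircle.liftIco_zero_coe_apply (f := fun t => prj (γ t)) ht
  have hsurj : ∀ x : AddCircle (1:ℝ), ∃ t ∈ Ico (0:ℝ) 1, (t : AddCircle (1:ℝ)) = x := by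
    intro x
    have := (AddCircle.equivIco (1:ℝ) 0 x).2
    exact ⟨_, ⟨this.1, this.2.trans_eq (zero_add 1)⟩, (AddCircle.equivIco (1:ℝ) 0).symm_apply_apply x⟩
  refine ⟨range φ, ⟨φ, ?_, rfl, ?_⟩, ?_⟩
  · intro x y hxy
    obtain ⟨t, ht, rfl⟩ := hsurj x
    obtain ⟨t', ht', rfl⟩ := hsurj y
    rw [hφ t ht, hφ t' ht'] at hxy
    obtain ⟨i, hi, s, s0, s1, hs⟩ := hdec t ht
    obtain ⟨i', hi', s', s0', s1', hs'⟩ := hdec t' ht'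
    rw [hγ i hi s s0 s1.le t hs, hγ i' hi' s' s0' s1'.le t' hs'] at hxy
    simp only [prj, Prod.mk.injEq] at hxy
    obtain ⟨h1, h2⟩ := hxy
    rw [← sub_eq_zero, ← AddCircle.coe_sub, AddCircle.coe_eq_zero_iff] at h1
    obtain ⟨l, hl⟩ := h1
    have E := edge_lemma (v i).1 (v i).2 (v (i+1)).1 (v (i+1)).2 (gSh m l (v i')).1 (gSh m l (v i')).2
      (gSh m l (v (i'+1))).1 (gSh m l (v (i'+1))).2 s s' s0 s1 s0' s1' (w2 i hi) ((w2 i' hi').sh m l)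
      (by
        simp only [gSh]
        push_cast
        simp only [zsmul_eq_mul, mul_one] at hl
        field_simp at hl
        linarith) (by
        simp only [gSh]
        field_simp at h2
        linarith)
    suffices hh : i = i' ∧ s = s' by
      obtain ⟨rfl, rfl⟩ := hh
      have : (L:ℝ) * t = L * t' := by rw [hs, hs']
      rw [mul_left_cancel₀ hL0.ne' this]
    rcases E with ⟨e1, e2, e3⟩ | ⟨e1, e2, e3, e4⟩
    · exact ⟨w4 i hi i' hi' l (Prod.ext e1 e2), e3⟩
    · exfalso
      have f1 : v i = gSh m l (v (i'+1)) := Prod.ext e1 e2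
      have f2 : v (i+1) = gSh m l (v i') := Prod.ext e3 e4
      have f3 : v i' = gSh m (-l) (v (i+1)) := by rw [f2, gSh_gSh, neg_add_cancel, gSh_zero]
      have g1 : i = i' + 1 ∨ (i' + 1 = L ∧ i = 0) := by
        by_cases h : i' + 1 < L
        · exact Or.inl (w4 _ hi _ h _ f1)
        · have h' : i' + 1 = L := by omega
          rw [h', w3, gSh_gSh] at f1
          exact Or.inr ⟨h', w4 _ hi 0 (by omega) _ f1⟩
      have g2 : i' = i + 1 ∨ (i + 1 = L ∧ i' = 0) := by
        by_cases h : i + 1 < L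
        · exact Or.inl (w4 _ hi' _ h _ f3)
        · have h' : i + 1 = L := by omega
          rw [h', w3, gSh_gSh] at f3
          exact Or.inr ⟨h', w4 _ hi' 0 (by omega) _ f3⟩
      omega
  · refine not_null φ (fun t => (γ t).1) (by fun_prop) (fun t ht => ?_) ?_
    · rcases ht.2.lt_or_eq with h | h
      · rw [hφ t ⟨ht.1, h⟩]; rfl
      · subst h
        have : ((1:ℝ) : AddCircle (1:ℝ)) = ((0:ℝ) : AddCircle (1:ℝ)) := by simp
        rw [this, hφ 0 (by simp), hloop]; rfl
    · show (γ 0).1 ≠ (γ 1).1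
      rw [hγ1]
      simpa [Tr] using hk
  · rintro z ⟨x, rfl⟩
    obtain ⟨t, ht, rfl⟩ := hsurj x
    obtain ⟨i, hi, s, s0, s1, hs⟩ := hdec t ht
    rw [hφ t ht, hγ i hi s s0 s1.le t hs]
    have hb := adj_bound _ _ (w2 i hi)
    have hs1 : |s| ≤ 1 := by rw [abs_of_nonneg s0]; exact s1.le
    have := abs_le.1 (hun ((((v i).1 + s * ((v (i+1)).1 - (v i).1)) / m, ((v i).2 + s * ((v (i+1)).2 - (v i).2)) / m))
      (((v i).1:ℝ) / m, ((v i).2:ℝ) / m) 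
      (by
        apply hsmall
        rw [sub_add_cancel_left, abs_neg, abs_mul]
        exact mul_le_one₀ hs1 (abs_nonneg _) hb.1)
      (by
        apply hsmall
        rw [sub_add_cancel_left, abs_neg, abs_mul]
        exact mul_le_one₀ hs1 (abs_nonneg _) hb.2))
    have := w1 i hi.le
    simp only [U] at this
    constructor <;> linarith


/-- horizontal circle -/
def hC (y : ℝ) : Set Ann := {z | z.2 = y}

theorem hC_range (y : ℝ) : range (fun x : AddCircle (1:ℝ) => ((x, y) : Ann)) = hC y := by
  ext z
  constructor
  · rintro ⟨x, rfl⟩; rfl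
  · intro h; exact ⟨z.1, Prod.ext rfl (Eq.symm h)⟩

theorem hC_ess (y : ℝ) : IsEssentialCircle (hC y) := by
  refine ⟨⟨fun x => (x, y), by fun_prop⟩, fun a b h => (Prod.ext_iff.1 h).1, hC_range y, ?_⟩
  exact not_null _ id continuous_id (fun t _ => rfl) (by simp)

theorem isPreconnected_band (S : Set ℝ) (hS : IsPreconnected S) :
    IsPreconnected {z : Ann | z.2 ∈ S} := by
  have : {z : Ann | z.2 ∈ S} = (univ : Set (AddCircle (1:ℝ))) ×ˢ S := by ext z; simp
  rw [this]
  exact isPreconnected_univ.prod hS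

theorem hC_conn (y : ℝ) : IsPreconnected (hC y) :=
  isPreconnected_band {y} isPreconnected_singleton

theorem band_compact (a b : ℝ) : IsCompact {z : Ann | z.2 ∈ Icc a b} := by
  haveI : Fact ((0:ℝ) < 1) := ⟨one_pos⟩
  have : {z : Ann | z.2 ∈ Icc a b} = (univ : Set (AddCircle (1:ℝ))) ×ˢ Icc a b := by ext z; simp
  rw [this]
  exact isCompact_univ.prod isCompact_Icc

theorem ip_symm (g : Ann ≃ₜ Ann) (h : IntersectionProperty g) : IntersectionProperty g.symm := by
  intro c hc
  obtain ⟨z, hz, w, hw, rfl⟩ := h c hc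
  exact ⟨w, hw, g w, hz, by simp⟩

/-- a preconnected set whose image avoids height `y` is on one side -/
theorem side {S : Set Ann} (hS : IsPreconnected S) (h : Ann → Ann) (hh : Continuous h)
    (y : ℝ) (hav : ∀ z ∈ S, (h z).2 ≠ y) {z₀ : Ann} (hz₀ : z₀ ∈ S) (hlt : (h z₀).2 < y) :
    ∀ z ∈ S, (h z).2 < y := by
  intro z hz
  by_contra hcon
  push Not at hcon
  have hc : IsPreconnected ((fun z => (h z).2) '' S) := hS.image _ (by fun_prop)
  have := hc.Icc_subset (mem_image_of_mem _ hz₀) (mem_image_of_mem _ hz) ⟨hlt.le, hcon⟩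
  obtain ⟨w, hw, e⟩ := this
  exact hav w hw e

theorem side_gt {S : Set Ann} (hS : IsPreconnected S) (h : Ann → Ann) (hh : Continuous h)
    (y : ℝ) (hav : ∀ z ∈ S, (h z).2 ≠ y) {z₀ : Ann} (hz₀ : z₀ ∈ S) (hlt : y < (h z₀).2) :
    ∀ z ∈ S, y < (h z).2 := by
  intro z hz
  by_contra hcon
  push Not at hcon
  have := side hS h hh y hav hz (lt_of_le_of_ne hcon (hav z hz)) z₀ hz₀
  linarith

/-- the map preserves both ends -/
def EndP (h : Ann → Ann) : Prop := ∀ M : ℝ, ∃ M' : ℝ, ∀ z,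
  (z.2 < -M' → (h z).2 < -M) ∧ (M' < z.2 → M < (h z).2)

theorem endP_id : EndP id := fun M => ⟨M, fun z => ⟨fun h => h, fun h => h⟩⟩

theorem EndP.comp {g h : Ann → Ann} (hg : EndP g) (hh : EndP h) : EndP (g ∘ h) := by
  intro M
  obtain ⟨M1, h1⟩ := hg M
  obtain ⟨M2, h2⟩ := hh M1
  exact ⟨M2, fun z => ⟨fun k => (h1 _).1 ((h2 z).1 k), fun k => (h1 _).2 ((h2 z).2 k)⟩⟩

theorem EndP.iter {g : Ann → Ann} (hg : EndP g) (n : ℕ) : EndP g^[n] := by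
  induction n with
  | zero => exact endP_id
  | succ k ih => rw [Function.iterate_succ]; exact ih.comp hg

theorem endP_of_ip (g : Ann ≃ₜ Ann) (h : IntersectionProperty g) : EndP g := by
  intro M₀
  obtain ⟨M, hM0, hM⟩ : ∃ M, 0 ≤ M ∧ M₀ ≤ M := ⟨max 0 M₀, le_max_left _ _, le_max_right _ _⟩
  have hcpt : IsCompact ((fun z : Ann => (g.symm z).2) '' {z : Ann | z.2 ∈ Icc (-M) M}) :=
    (band_compact _ _).image (by fun_prop)
  obtain ⟨R, hR⟩ := hcpt.isBounded.exists_norm_le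
  have key : ∀ z : Ann, (g z).2 ∈ Icc (-M) M → |z.2| ≤ R := by
    intro z hz
    have := hR z.2 ⟨g z, hz, by simp⟩
    simpa using this
  refine ⟨max R M, fun z => ⟨fun hz => ?_, fun hz => ?_⟩⟩
  · have hzR : z.2 < -R := lt_of_lt_of_le hz (neg_le_neg (le_max_left _ _))
    have hzM : z.2 < -M := lt_of_lt_of_le hz (neg_le_neg (le_max_right _ _))
    have hav : ∀ w ∈ hC z.2, (g w).2 ≠ -M := by
      intro w hw e
      have hw' : w.2 = z.2 := hw
      have := key w (by rw [e]; constructor <;> linarith)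
      rw [hw', abs_le] at this
      linarith
    obtain ⟨_, hm, w, hw, rfl⟩ := h _ (hC_ess z.2)
    have hm' : (g w).2 = z.2 := hm
    have := side (hC_conn z.2) g g.continuous (-M) hav hw (by rw [hm']; exact hzM) z rfl
    linarith
  · have hzR : R < z.2 := lt_of_le_of_lt (le_max_left _ _) hz
    have hzM : M < z.2 := lt_of_le_of_lt (le_max_right _ _) hz
    have hav : ∀ w ∈ hC z.2, (g w).2 ≠ M := by
      intro w hw e
      have hw' : w.2 = z.2 := hw
      have := key w (by rw [e]; constructor <;> linarith)
      rw [hw', abs_le] at this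
      linarith
    obtain ⟨_, hm, w, hw, rfl⟩ := h _ (hC_ess z.2)
    have hm' : (g w).2 = z.2 := hm
    have := side_gt (hC_conn z.2) g g.continuous M hav hw (by rw [hm']; exact hzM) z rfl
    linarith

theorem unif_end {ι : Type*} (s : Finset ι) (h : ι → Ann → Ann) (hh : ∀ i, EndP (h i)) (M : ℝ) :
    ∃ M' : ℝ, M ≤ M' ∧ 0 ≤ M' ∧ ∀ i ∈ s, ∀ z, (z.2 < -M' → (h i z).2 < -M) ∧ (M' < z.2 → M < (h i z).2) := by
  choose R hR using fun i => hh i M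
  refine ⟨max (max M 0) (∑ i ∈ s, |R i|), ?_, ?_, ?_⟩
  · exact (le_max_left _ _).trans (le_max_left _ _)
  · exact (le_max_right _ _).trans (le_max_left _ _)
  · intro i hi z
    have h1 : R i ≤ max (max M 0) (∑ i ∈ s, |R i|) :=
      (le_abs_self _).trans ((Finset.single_le_sum (f := fun i => |R i|) (fun _ _ => abs_nonneg _) hi).trans (le_max_right _ _))
    exact ⟨fun hz => (hR i z).1 (by linarith), fun hz => (hR i z).2 (by linarith)⟩

/-- An iterate cannot push the lower half annulus strictly inside itself. -/
theorem no_push (g : Ann ≃ₜ Ann) (hip : IntersectionProperty g) (n : ℕ) (hn : 0 < n)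
    (hpush : ∀ z : Ann, z.2 ≤ 0 → (g^[n] z).2 < 0) : False := by
  have hE := endP_of_ip g hip
  have hE' := endP_of_ip g.symm (ip_symm g hip)
  obtain ⟨δ, hδ, hgap⟩ : ∃ δ > 0, ∀ z : Ann, z.2 ≤ 0 → (g^[n] z).2 < -δ := by
    obtain ⟨R, hR⟩ := hE.iter n 1
    have hcpt := band_compact (-|R|) 0
    have hne : ({z : Ann | z.2 ∈ Icc (-|R|) 0}).Nonempty := ⟨(0, 0), by simp⟩
    have hcont : Continuous g^[n] := g.continuous.iterate n
    obtain ⟨z₀, hz₀, hmax⟩ := hcpt.exists_isMaxOn hne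
      (f := fun z => (g^[n] z).2) (by fun_prop)
    have h0 := hpush z₀ hz₀.2
    refine ⟨min (1/2) (-(g^[n] z₀).2 / 2), lt_min (by norm_num) (by linarith), fun z hz => ?_⟩
    by_cases hzR : z.2 < -|R|
    · have := (hR z).1 (by linarith [le_abs_self R])
      have := min_le_left (1/2 : ℝ) (-(g^[n] z₀).2 / 2)
      linarith
    · have h1 : (g^[n] z).2 ≤ (g^[n] z₀).2 := hmax (show z.2 ∈ Icc (-|R|) 0 from ⟨not_lt.1 hzR, hz⟩)
      have := min_le_right (1/2 : ℝ) (-(g^[n] z₀).2 / 2)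
      linarith
  have hn' : (0:ℝ) < n := by exact_mod_cast hn
  let s : ℕ → ℝ := fun i => -δ * ((n:ℝ) - 1 - i) / n
  have hs0 : -δ ≤ s 0 := by
    simp only [s, Nat.cast_zero]
    rw [le_div_iff₀ hn']; nlinarith
  have hs_top : s (n-1) = 0 := by
    simp only [s]; rw [Nat.cast_sub hn]; simp
  have hs_lt : ∀ i, s i < s (i+1) := by
    intro i
    simp only [s]
    push_cast
    rw [div_lt_div_iff_of_pos_right hn']
    nlinarith
  let b : ℕ → Ann → Ann := fun i => g.symm^[i]
  have hb : ∀ i, Continuous (b i) := fun i => g.symm.continuous.iterate i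
  have hbg : ∀ i z, b (i+1) (g z) = b i z := by
    intro i z
    simp only [b, Function.iterate_succ_apply, Homeomorph.symm_apply_apply]
  let V : Set Ann := ⋃ i ∈ Finset.range n, {z | (b i z).2 < s i}
  let W : Set Ann := ⋃ i ∈ Finset.range n, {z | (b i z).2 ≤ s i}
  have hV : IsOpen V := isOpen_biUnion fun i _ =>
    isOpen_lt (by have := hb i; fun_prop) continuous_const
  have hW : IsClosed W := isClosed_biUnion_finset fun i _ =>
    isClosed_le (by have := hb i; fun_prop) continuous_const
  have hVW : V ⊆ W := by
    intro z hz
    simp only [V, W, mem_iUnion, mem_setOf_eq] at hz ⊢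
    obtain ⟨i, hi, h⟩ := hz
    exact ⟨i, hi, h.le⟩
  have hgW : ∀ z ∈ W, g z ∈ V := by
    intro z hz
    simp only [V, W, mem_iUnion, mem_setOf_eq, Finset.mem_range] at hz ⊢
    obtain ⟨i, hi, h⟩ := hz
    by_cases hi' : i + 1 < n
    · exact ⟨i+1, hi', by rw [hbg]; exact h.trans_lt (hs_lt i)⟩
    · have hin : i = n - 1 := by omega
      refine ⟨0, hn, ?_⟩
      rw [hin, hs_top] at h
      have := hgap _ h
      have e : g^[n] (b (n-1) z) = g z := by
        have : n = (n-1) + 1 := by omega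
        rw [this, Function.iterate_succ_apply']
        simp only [b, Nat.add_sub_cancel]
        congr 1
        exact (Function.LeftInverse.iterate g.apply_symm_apply (n-1)) z
      rw [e] at this
      have e0 : b 0 (g z) = g z := rfl
      rw [e0]; linarith
  have hA : IsClosed (g.symm ⁻¹' W) := hW.preimage g.symm.continuous
  have hB : IsClosed Vᶜ := hV.isClosed_compl
  have hdisj : Disjoint (g.symm ⁻¹' W) Vᶜ := by
    rw [Set.disjoint_left]
    intro z hz hz'
    have := hgW _ hz
    rw [g.apply_symm_apply] at this
    exact hz' this
  obtain ⟨u, hu0, hu1, hu01⟩ := exists_continuous_zero_one_of_isClosed hA hB hdisj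
  have hEb : ∀ i, EndP (b i) := fun i => hE'.iter i
  obtain ⟨M, hδM, hM0, hM⟩ := unif_end (Finset.range (n+1)) b hEb δ
  obtain ⟨c, hc, hcu⟩ := exists_circle u u.continuous (M+1) (by linarith)
    (by
      intro z hz
      apply hu0
      simp only [W, mem_preimage, mem_iUnion, mem_setOf_eq, Finset.mem_range]
      refine ⟨0, hn, ?_⟩
      have := (hM 1 (by simp; omega) z).1 (by linarith)
      have e : b 1 z = b 0 (g.symm z) := rfl
      rw [e] at this
      linarith)
    (by
      intro z hz
      apply hu1
      simp only [V, mem_compl_iff, mem_iUnion, mem_setOf_eq, Finset.mem_range, not_exists, not_lt]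
      intro i hi
      have := (hM i (by simp; omega) z).2 (by linarith)
      have hi1 : (i:ℝ) + 1 ≤ n := by exact_mod_cast hi
      have hsi : s i ≤ 0 := by
        simp only [s]
        apply div_nonpos_of_nonpos_of_nonneg _ hn'.le
        nlinarith
      linarith)
  obtain ⟨_, h1, w, hw, rfl⟩ := hip c hc
  have hwV : w ∈ V := by
    by_contra hcon
    have e : u w = 1 := hu1 hcon
    linarith [(hcu w hw).2]
  have e : u (g w) = 0 := hu0 (by
    rw [mem_preimage, g.symm_apply_apply]; exact hVW hwV)
  linarith [(hcu _ h1).1]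

theorem push_of_below (g : Ann ≃ₜ Ann) (hip : IntersectionProperty g) (n : ℕ) (hn : 0 < n)
    (hab : ∀ z : Ann, z.2 = 0 → (g^[n] z).2 < 0) : False := by
  have hE' := (endP_of_ip g.symm (ip_symm g hip)).iter n
  have hli : ∀ z, g.symm^[n] (g^[n] z) = z := Function.LeftInverse.iterate g.symm_apply_apply n
  have hri : ∀ z, g^[n] (g.symm^[n] z) = z := Function.LeftInverse.iterate g.apply_symm_apply n
  have hup : ∀ z ∈ {z : Ann | z.2 ∈ Ici (0:ℝ)}, 0 < (g.symm^[n] z).2 := by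
    obtain ⟨M, hM⟩ := hE' 0
    refine side_gt (isPreconnected_band _ isPreconnected_Ici) _ (g.symm.continuous.iterate n) 0 ?_
      (z₀ := (0, |M| + 1)) ?_ ?_
    · intro z hz e
      have := hab _ e
      rw [hri] at this
      exact absurd (show (0:ℝ) ≤ z.2 from hz) (not_le.2 this)
    · show (0:ℝ) ≤ |M| + 1
      positivity
    · exact (hM _).2 (by show M < |M| + 1; linarith [le_abs_self M])
  refine no_push g hip n hn fun z hz => ?_
  by_contra hcon
  have := hup (g^[n] z) (not_lt.1 hcon)
  rw [hli] at this
  linarith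

theorem returns (g : Ann ≃ₜ Ann) (hip : IntersectionProperty g) (n : ℕ) (hn : 0 < n) :
    ∃ z : Ann, z.2 = 0 ∧ (g^[n] z).2 = 0 := by
  by_contra hcon
  push Not at hcon
  have hcont : Continuous g^[n] := g.continuous.iterate n
  have hli : ∀ z, g.symm^[n] (g^[n] z) = z := Function.LeftInverse.iterate g.symm_apply_apply n
  have hri : ∀ z, g^[n] (g.symm^[n] z) = z := Function.LeftInverse.iterate g.apply_symm_apply n
  by_cases h0 : (g^[n] ((0, 0) : Ann)).2 < 0
  · exact push_of_below g hip n hn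
      (side (hC_conn 0) _ hcont 0 hcon (z₀ := (0,0)) rfl h0)
  · have h0' := lt_of_le_of_ne (not_lt.1 h0) (hcon (0,0) rfl).symm
    have hall := side_gt (hC_conn 0) _ hcont 0 hcon (z₀ := (0,0)) rfl h0'
    have hE := (endP_of_ip g hip).iter n
    have hcon' : ∀ z : Ann, z.2 = 0 → (g.symm^[n] z).2 ≠ 0 := by
      intro z hz e
      exact hcon _ e (by rw [hri]; exact hz)
    have hE' := (endP_of_ip g.symm (ip_symm g hip)).iter n
    have hlow : ∀ z ∈ {z : Ann | z.2 ∈ Iic (0:ℝ)}, (g.symm^[n] z).2 < 0 := by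
      obtain ⟨M, hM⟩ := hE' 0
      refine side (isPreconnected_band _ isPreconnected_Iic) _ (g.symm.continuous.iterate n) 0 ?_
        (z₀ := (0, -|M| - 1)) ?_ ?_
      · intro z hz e
        have := hall _ e
        rw [hri] at this
        exact absurd (show z.2 ≤ (0:ℝ) from hz) (not_le.2 this)
      · show -|M| - 1 ≤ (0:ℝ)
        linarith [abs_nonneg M]
      · have := (hM (0, -|M| - 1)).1 (by show -|M| - 1 < -M; linarith [le_abs_self M])
        simpa using this
    exact no_push g.symm (ip_symm g hip) n hn fun z hz => hlow z hz

theorem rotWeak_nonempty (f : Ann ≃ₜ Ann) (F : Plane ≃ₜ Plane)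
    (hint : IntersectionProperty f) (hlift : IsLift f F) : (RotWeak F).Nonempty := by
  choose zs h1 h2 using fun k : ℕ => returns f hint (k+1) (Nat.succ_pos k)
  have hs : ∀ z : Ann, ∃ w : Plane, prj w = z := by
    rintro ⟨x, y⟩
    obtain ⟨x, rfl⟩ := QuotientAddGroup.mk_surjective x
    exact ⟨(x, y), rfl⟩
  choose ws hws using fun k => hs (zs k)
  obtain ⟨r, φ, hφ, hr⟩ := CompactSpace.tendsto_subseq
    (fun k => ((((F^[k+1] (ws k)).1 - (ws k).1) / ((k+1 : ℕ) : ℝ) : ℝ) : EReal))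
  refine ⟨r, ?_⟩
  simp only [RotWeak, mem_iUnion]
  refine ⟨{z : Ann | z.2 ∈ Icc (0:ℝ) 0}, band_compact 0 0, fun k => ws (φ k), fun k => φ k + 1,
    ?_, ?_, fun k => Nat.succ_pos _, ?_, hr⟩
  · intro k
    simp [hws, h1]
  · intro k
    rw [prj_iter hlift, hws]
    simp [h2, -Function.iterate_succ]
  · exact tendsto_atTop_mono (fun k => Nat.le_succ _) hφ.tendsto_atTop

/-- Proposition 5.1 (4): for all integers `p, q`,
`Rot_weak(F^q ∘ T^p) = q·Rot_weak(F) + p` (with the obvious conventions on [-∞,+∞]). -/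
theorem rotWeak_pow_comp_translation
    (f : Ann ≃ₜ Ann) (F : Plane ≃ₜ Plane)
    (hiso : IsotopicToId f) (hint : IntersectionProperty f) (hlift : IsLift f F)
    (p q : ℤ) :
    RotWeak (fun z => hpow F q (Tr p z)) =
      (fun r : EReal => (((q : ℝ)) : EReal) * r + (((p : ℝ)) : EReal)) '' RotWeak ⇑F := by
  exact main_of_nonempty ⟨hlift, F_Tr_one f F hiso hlift⟩ (rotWeak_nonempty f F hint hlift) p q
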